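/- Let 0 < b < a and let Ω = {p ∈ ℝ³ : (√(p₁² + p₂²) − a)² + p₃² < b²} be the open solid torus of revolution, and let M(p) = M_s (−p₂, p₁, 0)/√(p₁² + p₂²) be the purely azimuthal magnetization on Ω. Then the magnetostatic potential of M (extended by 0 outside Ω) vanishes identically: for every x ∈ ℝ³, (1/(4π)) ∫_Ω M(y)·(x − y)/‖x − y‖³ dy = 0; consequently the magnetostatic field H = −∇u and the magnetostatic energy density e_d of the azimuthally magnetized torus are exactly zero. -/

import Mathlib

open MeasureTheory Real

/-- The azimuthal unit vector field `m(p) = (-p₂, p₁, 0)/√(p₁² + p₂²)`. -/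
noncomputable def azimuthal (p : EuclideanSpace ℝ (Fin 3)) : EuclideanSpace ℝ (Fin 3) :=
  (Real.sqrt (p 0 ^ 2 + p 1 ^ 2))⁻¹ •
    (WithLp.equiv 2 (Fin 3 → ℝ)).symm ![-(p 1), p 0, 0]

/-- The open solid torus of revolution with radii `a > b > 0`. -/
def solidTorus (a b : ℝ) : Set (EuclideanSpace ℝ (Fin 3)) :=
  {p | (Real.sqrt (p 0 ^ 2 + p 1 ^ 2) - a) ^ 2 + p 2 ^ 2 < b ^ 2}

/-!
The reflection `σ` in the meridian plane through the observation point `x` fixes `x`, preserves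
Lebesgue measure and every domain of revolution, and sends the azimuthal field `m` to its opposite:
`m (σ y) = -σ (m y)`. Hence the integrand of the potential at `x` is odd under `σ`. On a bounded
domain it is `O(‖x - y‖⁻²)`, so it is integrable and its integral is a genuine one.
-/

open Module Submodule

section OddIntegrand

variable {α G : Type*} [MeasurableSpace α] {μ : Measure α} [NormedAddCommGroup G] [NormedSpace ℝ G]

theorem setIntegral_eq_zero_of_comp_eq_neg {s : Set α} {f : α → G} {e : α ≃ᵐ α}
    (he : MeasurePreserving e μ μ) (hs : e ⁻¹' s = s) (hf : ∀ y, f (e y) = -f y) :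
    ∫ y in s, f y ∂μ = 0 := by
  have : IsAddTorsionFree G := .of_isTorsionFree ℝ G
  rw [← self_eq_neg]
  calc ∫ y in s, f y ∂μ = ∫ y in e ⁻¹' s, f (e y) ∂μ :=
        (he.setIntegral_preimage_emb e.measurableEmbedding f s).symm
    _ = -∫ y in s, f y ∂μ := by simp only [hs, hf, integral_neg]

end OddIntegrand

section DipoleKernel

variable {E : Type*} [NormedAddCommGroup E] [InnerProductSpace ℝ E]

theorem norm_inner_div_norm_pow_le (v z : E) (k : ℕ) :
    ‖inner ℝ v z / ‖z‖ ^ k‖ ≤ ‖v‖ * ‖z‖ ^ (-(k - 1 : ℝ)) := by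
  rcases eq_or_ne z 0 with rfl | hz
  · simp only [inner_zero_right, zero_div, norm_zero]
    positivity
  · have hz : 0 < ‖z‖ := norm_pos_iff.mpr hz
    calc ‖inner ℝ v z / ‖z‖ ^ k‖ = ‖inner ℝ v z‖ / ‖z‖ ^ k := by
          rw [norm_div, norm_pow, norm_norm]
      _ ≤ ‖v‖ * ‖z‖ / ‖z‖ ^ k := by gcongr; exact norm_inner_le_norm v z
      _ = ‖v‖ * ‖z‖ ^ (-(k - 1 : ℝ)) := by
          rw [neg_sub, rpow_sub hz, rpow_one, rpow_natCast, mul_div_assoc]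

theorem inner_sub_div_norm_pow_comp_eq_neg {M : E → E} {x y : E} {σ : E ≃ₗᵢ[ℝ] E}
    (hx : σ x = x) (hM : M (σ y) = -σ (M y)) (k : ℕ) :
    inner ℝ (M (σ y)) (x - σ y) / ‖x - σ y‖ ^ k = -(inner ℝ (M y) (x - y) / ‖x - y‖ ^ k) := by
  have hsub : x - σ y = σ (x - y) := by rw [map_sub, hx]
  rw [hM, hsub, inner_neg_left, σ.inner_map_map, σ.norm_map, neg_div]

variable [FiniteDimensional ℝ E] [MeasurableSpace E] [BorelSpace E]

theorem integrableOn_inner_sub_div_norm_pow [Nontrivial E] {μ : Measure E} [μ.IsAddHaarMeasure]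
    {M : E → E} {C : ℝ} {k : ℕ} {s : Set E} (hM : AEStronglyMeasurable M μ)
    (hC : ∀ y, ‖M y‖ ≤ C) (hk : k ≤ finrank ℝ E) (hs : Bornology.IsBounded s) (x : E) :
    IntegrableOn (fun y ↦ inner ℝ (M y) (x - y) / ‖x - y‖ ^ k) s μ := by
  have hsub : MeasurePreserving (fun y ↦ x - y) μ μ := μ.measurePreserving_sub_left x
  have hkernel : LocallyIntegrable (fun z ↦ inner ℝ (M (x - z)) z / ‖z‖ ^ k) μ := by
    have hexp : (k - 1 : ℝ) < finrank ℝ E := by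
      have : (k : ℝ) ≤ finrank ℝ E := mod_cast hk
      linarith
    refine locallyIntegrable_of_norm_le_rpow finrank_pos hexp (C := C) (.of_forall fun z ↦ ?_) ?_
    · exact (norm_inner_div_norm_pow_le _ z k).trans (by gcongr; exact hC _)
    · have hMsub := hM.comp_quasiMeasurePreserving hsub.quasiMeasurePreserving
      have hpow : AEStronglyMeasurable (fun z : E ↦ ‖z‖ ^ k) μ := by fun_prop
      exact (hMsub.inner aestronglyMeasurable_id).div₀ hpow
  obtain ⟨R, hR⟩ := hs.subset_closedBall x
  have hball := hsub.integrableOn_comp_preimage (MeasurableEquiv.subLeft x).measurableEmbedding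
    |>.mpr (hkernel.integrableOn_isCompact (isCompact_closedBall 0 R))
  refine IntegrableOn.mono_set (by simpa [Function.comp_def] using hball) fun y hy ↦ ?_
  simpa [dist_eq_norm, norm_sub_rev] using hR hy

theorem setIntegral_inner_sub_div_norm_pow_eq_zero {M : E → E} {x : E} {s : Set E}
    {σ : E ≃ₗᵢ[ℝ] E} (hx : σ x = x) (hs : σ ⁻¹' s = s) (hM : ∀ y, M (σ y) = -σ (M y)) (k : ℕ) :
    ∫ y in s, inner ℝ (M y) (x - y) / ‖x - y‖ ^ k = 0 :=
  setIntegral_eq_zero_of_comp_eq_neg (e := σ.toMeasurableEquiv) σ.measurePreserving hs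
    fun y ↦ inner_sub_div_norm_pow_comp_eq_neg hx (hM y) k

end DipoleKernel

section MeridianReflection

/-- The unit normal to the meridian plane, that is the plane through the third axis, of
azimuthal angle `θ`. -/
noncomputable def meridianNormal (θ : ℝ) : EuclideanSpace ℝ (Fin 3) :=
  !₂[-sin θ, cos θ, 0]

/-- The reflection of `ℝ³` in the meridian plane of azimuthal angle `θ`. -/
noncomputable def meridianReflection (θ : ℝ) :
    EuclideanSpace ℝ (Fin 3) ≃ₗᵢ[ℝ] EuclideanSpace ℝ (Fin 3) :=
  (ℝ ∙ meridianNormal θ)ᗮ.reflection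

theorem inner_meridianNormal (θ : ℝ) (y : EuclideanSpace ℝ (Fin 3)) :
    inner ℝ (meridianNormal θ) y = cos θ * y 1 - sin θ * y 0 := by
  simp [meridianNormal, PiLp.inner_apply, Fin.sum_univ_three, mul_comm, sub_eq_neg_add]

theorem norm_meridianNormal (θ : ℝ) : ‖meridianNormal θ‖ = 1 := by
  simp [meridianNormal, EuclideanSpace.norm_eq, Fin.sum_univ_three]

theorem meridianReflection_apply (θ : ℝ) (y : EuclideanSpace ℝ (Fin 3)) :
    meridianReflection θ y =
      !₂[cos (2 * θ) * y 0 + sin (2 * θ) * y 1, sin (2 * θ) * y 0 - cos (2 * θ) * y 1, y 2] := by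
  have hreflection : meridianReflection θ y =
      y - (2 * (cos θ * y 1 - sin θ * y 0)) • meridianNormal θ := by
    rw [meridianReflection, reflection_orthogonal_apply, reflection_singleton_apply,
      inner_meridianNormal, norm_meridianNormal, neg_sub, RCLike.ofReal_one, one_pow, div_one,
      mul_smul, ofNat_smul_eq_nsmul ℝ]
  rw [hreflection, meridianNormal, cos_two_mul, sin_two_mul]
  ext i
  fin_cases i
  · simp only [Fin.zero_eta, PiLp.sub_apply, PiLp.smul_apply, Matrix.cons_val_zero, smul_eq_mul]
    linear_combination (-2 * y 0) * sin_sq_add_cos_sq θ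
  · simp only [Fin.mk_one, PiLp.sub_apply, PiLp.smul_apply, Matrix.cons_val_one,
      Matrix.cons_val_zero, smul_eq_mul]
    ring
  · simp

theorem exists_meridianReflection_eq_self (x : EuclideanSpace ℝ (Fin 3)) :
    ∃ θ, meridianReflection θ x = x := by
  let w : ℂ := ⟨x 0, x 1⟩
  have hx₀ : ‖w‖ * cos w.arg = x 0 := Complex.norm_mul_cos_arg w
  have hx₁ : ‖w‖ * sin w.arg = x 1 := Complex.norm_mul_sin_arg w
  refine ⟨w.arg, reflection_mem_subspace_eq_self ?_⟩
  rw [mem_orthogonal_singleton_iff_inner_right, inner_meridianNormal, ← hx₀, ← hx₁]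
  ring

theorem meridianReflection_apply_zero_sq_add_apply_one_sq
    (θ : ℝ) (y : EuclideanSpace ℝ (Fin 3)) :
    meridianReflection θ y 0 ^ 2 + meridianReflection θ y 1 ^ 2 = y 0 ^ 2 + y 1 ^ 2 := by
  simp only [meridianReflection_apply, Matrix.cons_val_zero, Matrix.cons_val_one]
  linear_combination (y 0 ^ 2 + y 1 ^ 2) * cos_sq_add_sin_sq (2 * θ)

theorem meridianReflection_apply_two (θ : ℝ) (y : EuclideanSpace ℝ (Fin 3)) :
    meridianReflection θ y 2 = y 2 := by
  simp [meridianReflection_apply]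

end MeridianReflection

section AzimuthalField

theorem azimuthal_meridianReflection (θ : ℝ) (y : EuclideanSpace ℝ (Fin 3)) :
    azimuthal (meridianReflection θ y) = -meridianReflection θ (azimuthal y) := by
  rw [azimuthal, meridianReflection_apply_zero_sq_add_apply_one_sq, azimuthal, map_smul, ← smul_neg]
  congr 1
  ext i
  fin_cases i <;> simp [meridianReflection_apply, sub_eq_add_neg, add_comm]

theorem norm_azimuthal_le_one (y : EuclideanSpace ℝ (Fin 3)) : ‖azimuthal y‖ ≤ 1 := by
  have hnorm : ‖azimuthal y‖ = (√(y 0 ^ 2 + y 1 ^ 2))⁻¹ * √(y 0 ^ 2 + y 1 ^ 2) := by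
    rw [azimuthal, norm_smul, norm_inv, norm_of_nonneg (sqrt_nonneg _)]
    simp [EuclideanSpace.norm_eq, Fin.sum_univ_three, add_comm]
  rw [hnorm]
  exact inv_mul_le_one

theorem measurable_azimuthal : Measurable azimuthal := by
  have hscale : Measurable fun p : EuclideanSpace ℝ (Fin 3) ↦ (√(p 0 ^ 2 + p 1 ^ 2))⁻¹ := by
    fun_prop
  have hdirection : Measurable fun p : EuclideanSpace ℝ (Fin 3) ↦ ![-(p 1), p 0, 0] := by
    fun_prop
  exact hscale.smul ((PiLp.continuous_toLp 2 _).measurable.comp hdirection)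

end AzimuthalField

/-- A set of revolution about the third axis: membership of a point depends only on its distance
to the axis, which the definition compares through its square, and on its height. -/
def IsAxisymmetric (s : Set (EuclideanSpace ℝ (Fin 3))) : Prop :=
  ∀ ⦃p q : EuclideanSpace ℝ (Fin 3)⦄,
    p 0 ^ 2 + p 1 ^ 2 = q 0 ^ 2 + q 1 ^ 2 → p 2 = q 2 → (p ∈ s ↔ q ∈ s)

theorem IsAxisymmetric.preimage_meridianReflection {s : Set (EuclideanSpace ℝ (Fin 3))}
    (hs : IsAxisymmetric s) (θ : ℝ) : meridianReflection θ ⁻¹' s = s :=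
  Set.ext fun y ↦ hs (meridianReflection_apply_zero_sq_add_apply_one_sq θ y)
    (meridianReflection_apply_two θ y)

theorem isAxisymmetric_solidTorus (a b : ℝ) : IsAxisymmetric (solidTorus a b) := by
  intro p q hradius hheight
  simp only [solidTorus, Set.mem_ofPred_eq, hradius, hheight]

theorem isBounded_solidTorus (a b : ℝ) : Bornology.IsBounded (solidTorus a b) := by
  refine (Metric.isBounded_closedBall (x := 0) (r := √((|a| + |b|) ^ 2 + b ^ 2))).subset
    fun p hp ↦ ?_
  have hp : (√(p 0 ^ 2 + p 1 ^ 2) - a) ^ 2 + p 2 ^ 2 < b ^ 2 := hp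
  have hradius : √(p 0 ^ 2 + p 1 ^ 2) ≤ |a| + |b| := by
    have hdist : |√(p 0 ^ 2 + p 1 ^ 2) - a| ≤ |b| := sq_le_sq.mp (by nlinarith)
    linarith [le_abs_self (√(p 0 ^ 2 + p 1 ^ 2) - a), le_abs_self a]
  have hheight : p 2 ^ 2 ≤ b ^ 2 := by nlinarith
  rw [mem_closedBall_zero_iff, EuclideanSpace.norm_eq]
  simp only [Fin.sum_univ_three, Real.norm_eq_abs, sq_abs]
  gcongr
  exact (sqrt_le_left (by positivity)).mp hradius

theorem magPot_azimuthal_torus_zero_general {Ω : Set (EuclideanSpace ℝ (Fin 3))}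
    (hΩ : IsAxisymmetric Ω) (hbdd : Bornology.IsBounded Ω) (Ms : ℝ) (x : EuclideanSpace ℝ (Fin 3)) :
    IntegrableOn (fun y ↦ inner ℝ (Ms • azimuthal y) (x - y) / ‖x - y‖ ^ 3) Ω ∧
      (1 / (4 * π)) * ∫ y in Ω, inner ℝ (Ms • azimuthal y) (x - y) / ‖x - y‖ ^ 3 = 0 := by
  constructor
  · have hM : ∀ y, ‖Ms • azimuthal y‖ ≤ |Ms| := fun y ↦ by
      rw [norm_smul, Real.norm_eq_abs]
      exact mul_le_of_le_one_right (abs_nonneg Ms) (norm_azimuthal_le_one y)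
    exact integrableOn_inner_sub_div_norm_pow
      (measurable_azimuthal.const_smul Ms).aestronglyMeasurable hM (by simp) hbdd x
  · obtain ⟨θ, hθ⟩ := exists_meridianReflection_eq_self x
    have hM : ∀ y, Ms • azimuthal (meridianReflection θ y) =
        -meridianReflection θ (Ms • azimuthal y) := fun y ↦ by
      rw [azimuthal_meridianReflection, map_smul, smul_neg]
    rw [setIntegral_inner_sub_div_norm_pow_eq_zero hθ (hΩ.preimage_meridianReflection θ) hM,
      mul_zero]

/-- The magnetostatic potential of the azimuthally magnetized solid torus vanishes
identically, so its demagnetizing field and magnetostatic energy density are exactly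
zero. -/
theorem magPot_azimuthal_torus_zero (a b Ms : ℝ) (hb : 0 < b) (hba : b < a) (hMs : 0 < Ms) :
    ∀ x : EuclideanSpace ℝ (Fin 3),
      (1 / (4 * π)) * ∫ y in solidTorus a b,
          (inner ℝ (Ms • azimuthal y) (x - y) : ℝ) / ‖x - y‖ ^ 3 = 0 :=
  fun x ↦ (magPot_azimuthal_torus_zero_general (isAxisymmetric_solidTorus a b)
    (isBounded_solidTorus a b) Ms x).2
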